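/- Let I be an ideal of C^∞(ℝ^n, ℝ) and J an ideal of C^∞(ℝ^m, ℝ) such that the quotient ℝ-algebras W₁ = C^∞(ℝ^n, ℝ)/I and W₂ = C^∞(ℝ^m, ℝ)/J are Weil algebras. Then for every ℝ-algebra homomorphism φ : W₁ → W₂ there exists a smooth map ψ : ℝ^m → ℝ^n such that precomposition with ψ maps I into J and the induced ℝ-algebra homomorphism C^∞(ℝ^n, ℝ)/I → C^∞(ℝ^m, ℝ)/J, [u] ↦ [u∘ψ], equals φ. -/

import Mathlib

open scoped Manifold

local notation "∞" => (⊤ : ℕ∞)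

/-- A Weil algebra over `ℝ`: a commutative `ℝ`-algebra which is finite-dimensional as an
`ℝ`-vector space, is a local ring whose maximal ideal is nilpotent, and whose residue
field is isomorphic to `ℝ`. -/
structure IsWeilAlgebra (W : Type*) [CommRing W] [Algebra ℝ W] : Prop where
  finiteDimensional : FiniteDimensional ℝ W
  isLocalRing : IsLocalRing W
  maximalIdeal_nilpotent : ∃ k : ℕ, (@IsLocalRing.maximalIdeal W _ isLocalRing) ^ k = ⊥
  residueField_iso : Nonempty ((@IsLocalRing.ResidueField W _ isLocalRing) ≃ₐ[ℝ] ℝ)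

/-!
Lift the classes `φ [xᵢ]` to smooth functions `vᵢ` and let `ψ` be the map with coordinates `vᵢ`.
Then `u ↦ φ [u]` and `u ↦ [u ∘ ψ]` are two homomorphisms which agree on the coordinate functions.
Given a character `χ` of the target, let `p` be the point whose coordinates are the values of `χ`
on the common images of the `xᵢ`. Hadamard's lemma `u = u(p) + ∑ᵢ (xᵢ - pᵢ) gᵢ` writes the
discrepancy at `u` in terms of those at the `gᵢ`, with coefficients in `ker χ`; iterating it puts
the discrepancy into every power of `ker χ`. In a Weil algebra one of these powers is zero.
-/

section ParametricIntegral

open MeasureTheory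

variable {E F : Type*} [NormedAddCommGroup E] [NormedSpace ℝ E]
  [NormedAddCommGroup F] [NormedSpace ℝ F]
  {μ : Measure ℝ} [IsLocallyFiniteMeasure μ] {f : E × ℝ → F}

theorem hasFDerivAt_intervalIntegral_of_contDiff [LocallyCompactSpace E]
    (hf : ContDiff ℝ 1 f) (a b : ℝ) (x₀ : E) :
    HasFDerivAt (fun x => ∫ t in a..b, f (x, t) ∂μ)
      (∫ t in a..b, (fderiv ℝ f (x₀, t)).comp (ContinuousLinearMap.inl ℝ E ℝ) ∂μ) x₀ := by
  let f' : E × ℝ → E →L[ℝ] F := fun q => (fderiv ℝ f q).comp (ContinuousLinearMap.inl ℝ E ℝ)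
  have hf' : Continuous f' := (hf.continuous_fderiv one_ne_zero).clm_comp continuous_const
  have hderiv (x : E) (t : ℝ) : HasFDerivAt (fun x => f (x, t)) (f' (x, t)) x :=
    (hf.differentiable one_ne_zero (x, t)).hasFDerivAt.comp x (hasFDerivAt_prodMk_left x t)
  have hf_slice (x : E) : Continuous fun t => f (x, t) := hf.continuous.comp (by fun_prop)
  have hf'_slice : Continuous fun t => f' (x₀, t) := hf'.comp (by fun_prop)
  obtain ⟨s, hs, hs_nhds⟩ := exists_compact_mem_nhds x₀
  obtain ⟨C, hC⟩ := (hs.prod (isCompact_uIcc (a := a) (b := b))).exists_bound_of_continuousOn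
    hf'.continuousOn
  exact intervalIntegral.hasFDerivAt_integral_of_dominated_of_fderiv_le
    (F := fun x t => f (x, t)) (F' := fun x t => f' (x, t)) (bound := fun _ => C) hs_nhds
    (.of_forall fun x => (hf_slice x).aestronglyMeasurable)
    ((hf_slice x₀).intervalIntegrable a b) hf'_slice.aestronglyMeasurable
    (.of_forall fun t ht x hx => hC (x, t) ⟨hx, Set.uIoc_subset_uIcc ht⟩)
    intervalIntegrable_const (.of_forall fun t _ x _ => hderiv x t)

theorem contDiff_intervalIntegral_of_contDiff [FiniteDimensional ℝ E] [NullSingletonClass μ]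
    {r : ℕ∞} (hf : ContDiff ℝ r f) (a b : ℝ) :
    ContDiff ℝ r fun x => ∫ t in a..b, f (x, t) ∂μ := by
  refine contDiff_iff_forall_nat_le.2 fun k hk => ?_
  replace hf : ContDiff ℝ k f := hf.of_le (mod_cast hk)
  clear hk
  induction k generalizing f with
  | zero =>
    exact contDiff_zero.2 (intervalIntegral.continuous_parametric_intervalIntegral_of_continuous'
      (f := fun x t => f (x, t)) hf.continuous a b)
  | succ k ih =>
    push_cast at hf ⊢
    have hderiv := hasFDerivAt_intervalIntegral_of_contDiff (μ := μ)
      (hf.of_le (by norm_cast; simp)) a b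
    refine contDiff_succ_iff_fderiv_apply.2
      ⟨fun x => (hderiv x).differentiableAt, by simp, fun y => ?_⟩
    have hf' : ContDiff ℝ k (fderiv ℝ f) := hf.fderiv_right le_rfl
    have hfderiv_apply (x : E) : fderiv ℝ (fun x => ∫ t in a..b, f (x, t) ∂μ) x y =
        ∫ t in a..b, fderiv ℝ f (x, t) (y, 0) ∂μ := by
      have hcont : Continuous fun t =>
          (fderiv ℝ f (x, t)).comp (ContinuousLinearMap.inl ℝ E ℝ) :=
        (hf'.continuous.comp (by fun_prop)).clm_comp continuous_const
      rw [(hderiv x).fderiv,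
        ContinuousLinearMap.intervalIntegral_apply (hcont.intervalIntegrable a b)]
      simp only [ContinuousLinearMap.comp_apply, ContinuousLinearMap.inl_apply]
    simp only [hfderiv_apply]
    exact ih (hf'.clm_apply contDiff_const)

end ParametricIntegral

theorem exists_contDiff_sub_eq_clm_apply {E F : Type*} [NormedAddCommGroup E] [NormedSpace ℝ E]
    [FiniteDimensional ℝ E] [NormedAddCommGroup F] [NormedSpace ℝ F] [CompleteSpace F] {r : ℕ∞}
    {u : E → F} (hu : ContDiff ℝ (r + 1) u) (p : E) :
    ∃ G : E → E →L[ℝ] F, ContDiff ℝ r G ∧ ∀ x, u x - u p = G x (x - p) := by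
  let f : E × ℝ → E →L[ℝ] F := fun q => fderiv ℝ u (p + q.2 • (q.1 - p))
  have hf : ContDiff ℝ r f := (hu.fderiv_right le_rfl).comp (by fun_prop)
  refine ⟨fun x => ∫ t in (0 : ℝ)..1, f (x, t), contDiff_intervalIntegral_of_contDiff hf 0 1,
    fun x => ?_⟩
  have hf_slice : Continuous fun t : ℝ => f (x, t) := hf.continuous.comp (by fun_prop)
  have hsegment (t : ℝ) : HasDerivAt (fun t : ℝ => u (p + t • (x - p))) (f (x, t) (x - p)) t := by
    have hline : HasDerivAt (fun t : ℝ => p + t • (x - p)) (x - p) t := by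
      simpa using ((hasDerivAt_id t).smul_const (x - p)).const_add p
    exact (hu.differentiable (by simp) _).hasFDerivAt.comp_hasDerivAt t hline
  symm
  calc (∫ t in (0 : ℝ)..1, f (x, t)) (x - p)
      = ∫ t in (0 : ℝ)..1, f (x, t) (x - p) :=
        ContinuousLinearMap.intervalIntegral_apply (hf_slice.intervalIntegrable 0 1) _
    _ = u (p + (1 : ℝ) • (x - p)) - u (p + (0 : ℝ) • (x - p)) :=
        intervalIntegral.integral_eq_sub_of_hasDerivAt (fun t _ => hsegment t)
          ((hf_slice.clm_apply continuous_const).intervalIntegrable 0 1)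
    _ = u x - u p := by simp

/-- A commutative `K`-algebra is *near-point determined* if its elements are separated by the
infinitesimal neighbourhoods `A ⧸ (ker χ) ^ k` of its `K`-points `χ`. For a quotient of
`C^∞(ℝ^n, ℝ)` this says that it embeds into a product of Weil algebras. -/
def IsNearPointDetermined (K A : Type*) [CommRing K] [CommRing A] [Algebra K A] : Prop :=
  ⨅ (χ : A →ₐ[K] K) (k : ℕ), RingHom.ker χ ^ k = ⊥

theorem IsNearPointDetermined.eq_of_forall_sub_mem {K A : Type*} [CommRing K] [CommRing A]
    [Algebra K A] (hA : IsNearPointDetermined K A) {a b : A}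
    (h : ∀ (χ : A →ₐ[K] K) (k : ℕ), a - b ∈ RingHom.ker χ ^ k) : a = b := by
  have hmem : a - b ∈ ⨅ (χ : A →ₐ[K] K) (k : ℕ), RingHom.ker χ ^ k := by
    simpa only [Submodule.mem_iInf] using h
  rwa [hA, Ideal.mem_bot, sub_eq_zero] at hmem

theorem IsWeilAlgebra.isNearPointDetermined {W : Type*} [CommRing W] [Algebra ℝ W]
    (hW : IsWeilAlgebra W) : IsNearPointDetermined ℝ W := by
  have := hW.isLocalRing
  obtain ⟨k, hk⟩ := hW.maximalIdeal_nilpotent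
  obtain ⟨e⟩ := hW.residueField_iso
  let χ : W →ₐ[ℝ] ℝ := e.toAlgHom.comp (IsScalarTower.toAlgHom ℝ W _)
  have hker : RingHom.ker χ ≤ IsLocalRing.maximalIdeal W :=
    IsLocalRing.le_maximalIdeal (RingHom.ker_ne_top χ)
  exact eq_bot_iff.2 <| calc
    ⨅ (χ : W →ₐ[ℝ] ℝ) (k : ℕ), RingHom.ker χ ^ k ≤ RingHom.ker χ ^ k :=
        (iInf_le _ χ).trans (iInf_le _ k)
    _ ≤ IsLocalRing.maximalIdeal W ^ k := Ideal.pow_right_mono hker k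
    _ = ⊥ := hk

section Coordinates

variable {E ι : Type*} [NormedAddCommGroup E] [NormedSpace ℝ E] [FiniteDimensional ℝ E]
  (b : Module.Basis ι ℝ E)

/-- The `i`-th coordinate function of a basis, as an element of `C^∞(E, ℝ)`. The values of a
homomorphism on these functions play the role of its values on generators. -/
noncomputable def smoothCoord (i : ι) : C^∞⟮𝓘(ℝ, E), E; 𝓘(ℝ, ℝ), ℝ⟯ :=
  LinearMap.toContinuousLinearMap (b.coord i)

theorem exists_eq_algebraMap_add_sum_smoothCoord_sub_mul [Fintype ι]
    (u : C^∞⟮𝓘(ℝ, E), E; 𝓘(ℝ, ℝ), ℝ⟯) (p : E) :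
    ∃ g : ι → C^∞⟮𝓘(ℝ, E), E; 𝓘(ℝ, ℝ), ℝ⟯,
      u = algebraMap ℝ _ (u p) + ∑ i, (smoothCoord b i - algebraMap ℝ _ (b.repr p i)) * g i := by
  obtain ⟨G, hG, hGu⟩ := exists_contDiff_sub_eq_clm_apply (r := ∞) u.contMDiff.contDiff p
  let g : ι → C^∞⟮𝓘(ℝ, E), E; 𝓘(ℝ, ℝ), ℝ⟯ := fun i =>
    ⟨fun x => G x (b i), (hG.clm_apply contDiff_const).contMDiff⟩
  refine ⟨g, ContMDiffMap.ext fun x => ?_⟩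
  have hG_sum : G x (x - p) = ∑ i, (b.repr x i - b.repr p i) * G x (b i) := by
    conv_lhs => rw [← b.sum_repr (x - p)]
    simp only [map_sum, map_smul, map_sub, Finsupp.sub_apply, smul_eq_mul]
  calc u x = u p + ∑ i, (b.repr x i - b.repr p i) * G x (b i) := by
        rw [← hG_sum, ← hGu, add_sub_cancel]
    _ = u p + ∑ i, ((smoothCoord b i - algebraMap ℝ _ (b.repr p i)) * g i) x := rfl
    _ = (algebraMap ℝ _ (u p) +
          ∑ i, (smoothCoord b i - algebraMap ℝ _ (b.repr p i)) * g i : C^∞⟮_, E; _, ℝ⟯) x := by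
        rw [ContMDiffMap.coe_add, Pi.add_apply, ← ContMDiffMap.coeFnAlgHom_apply (∑ i, _),
          map_sum, Finset.sum_apply]
        rfl

theorem sub_mem_ker_pow_of_eq_on_smoothCoord {A : Type*} [CommRing A] [Algebra ℝ A]
    {α β : C^∞⟮𝓘(ℝ, E), E; 𝓘(ℝ, ℝ), ℝ⟯ →ₐ[ℝ] A}
    (h : ∀ i, α (smoothCoord b i) = β (smoothCoord b i)) (χ : A →ₐ[ℝ] ℝ) (k : ℕ)
    (u : C^∞⟮𝓘(ℝ, E), E; 𝓘(ℝ, ℝ), ℝ⟯) : α u - β u ∈ RingHom.ker χ ^ k := by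
  have := FiniteDimensional.fintypeBasisIndex b
  let p : E := b.equivFun.symm fun i => χ (α (smoothCoord b i))
  have hp (i : ι) : b.repr p i = χ (α (smoothCoord b i)) :=
    congrFun (b.equivFun.apply_symm_apply _) i
  induction k generalizing u with
  | zero => simp
  | succ k ih =>
    obtain ⟨g, hg⟩ := exists_eq_algebraMap_add_sum_smoothCoord_sub_mul b u p
    have hdiff : α u - β u =
        ∑ i, (α (smoothCoord b i) - algebraMap ℝ A (b.repr p i)) * (α (g i) - β (g i)) := by
      rw [hg]
      simp [h, mul_sub]
    rw [hdiff, pow_succ']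
    refine Ideal.sum_mem _ fun i _ => Ideal.mul_mem_mul ?_ (ih (g i))
    simp [RingHom.mem_ker, hp]

theorem IsNearPointDetermined.algHom_ext {A : Type*} [CommRing A] [Algebra ℝ A]
    (hA : IsNearPointDetermined ℝ A) {α β : C^∞⟮𝓘(ℝ, E), E; 𝓘(ℝ, ℝ), ℝ⟯ →ₐ[ℝ] A}
    (h : ∀ i, α (smoothCoord b i) = β (smoothCoord b i)) : α = β :=
  AlgHom.ext fun u => hA.eq_of_forall_sub_mem fun χ k =>
    sub_mem_ker_pow_of_eq_on_smoothCoord b h χ k u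

end Coordinates

/-- The pullback `u ↦ u ∘ ψ` along a `C^r` map `ψ`, bundled as an algebra homomorphism so that it
can be compared with other homomorphisms out of the algebra of `C^r` functions. -/
def contMDiffPullback {𝕜 E E' H H' M N A : Type*} [NontriviallyNormedField 𝕜]
    [NormedAddCommGroup E] [NormedSpace 𝕜 E] [NormedAddCommGroup E'] [NormedSpace 𝕜 E']
    [TopologicalSpace H] [TopologicalSpace H'] {I : ModelWithCorners 𝕜 E H}
    {I' : ModelWithCorners 𝕜 E' H'} [TopologicalSpace M] [ChartedSpace H M]
    [TopologicalSpace N] [ChartedSpace H' N] {r : WithTop ℕ∞} [NormedRing A] [NormedAlgebra 𝕜 A]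
    [ContMDiffRing 𝓘(𝕜, A) r A] (ψ : C^r⟮I, M; I', N⟯) :
    C^r⟮I', N; 𝓘(𝕜, A), A⟯ →ₐ[𝕜] C^r⟮I, M; 𝓘(𝕜, A), A⟯ where
  toFun u := u.comp ψ
  map_one' := rfl
  map_mul' _ _ := rfl
  map_zero' := rfl
  map_add' _ _ := rfl
  commutes' _ := rfl

section Lifting

variable {E E' H M : Type*} [NormedAddCommGroup E] [NormedSpace ℝ E] [FiniteDimensional ℝ E]
  [NormedAddCommGroup E'] [NormedSpace ℝ E'] [TopologicalSpace H] {I' : ModelWithCorners ℝ E' H}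
  [TopologicalSpace M] [ChartedSpace H M]

theorem exists_smoothCoord_comp_eq {ι : Type*} (b : Module.Basis ι ℝ E)
    (v : ι → C^∞⟮I', M; 𝓘(ℝ, ℝ), ℝ⟯) :
    ∃ ψ : C^∞⟮I', M; 𝓘(ℝ, E), E⟯, ∀ i, (smoothCoord b i).comp ψ = v i := by
  have := FiniteDimensional.fintypeBasisIndex b
  let e : (ι → ℝ) →L[ℝ] E := LinearMap.toContinuousLinearMap b.equivFun.symm
  refine ⟨⟨fun x => e fun i => v i x,
    e.contMDiff.comp (contMDiff_pi_space.2 fun i => (v i).contMDiff)⟩, fun i => ?_⟩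
  ext x
  exact congrFun (b.equivFun.apply_symm_apply fun i => v i x) i

theorem exists_eq_mkₐ_comp_contMDiffPullback {J : Ideal C^∞⟮I', M; 𝓘(ℝ, ℝ), ℝ⟯}
    (hJ : IsNearPointDetermined ℝ (C^∞⟮I', M; 𝓘(ℝ, ℝ), ℝ⟯ ⧸ J))
    (α : C^∞⟮𝓘(ℝ, E), E; 𝓘(ℝ, ℝ), ℝ⟯ →ₐ[ℝ] C^∞⟮I', M; 𝓘(ℝ, ℝ), ℝ⟯ ⧸ J) :
    ∃ ψ : C^∞⟮I', M; 𝓘(ℝ, E), E⟯, α = (Ideal.Quotient.mkₐ ℝ J).comp (contMDiffPullback ψ) := by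
  let b := Module.finBasis ℝ E
  choose v hv using fun i => Ideal.Quotient.mk_surjective (α (smoothCoord b i))
  obtain ⟨ψ, hψ⟩ := exists_smoothCoord_comp_eq b v
  refine ⟨ψ, hJ.algHom_ext b fun i => ?_⟩
  calc α (smoothCoord b i) = Ideal.Quotient.mk J (v i) := (hv i).symm
    _ = Ideal.Quotient.mk J ((smoothCoord b i).comp ψ) := by rw [hψ]

theorem weilAlgebraHom_exists_smooth_map_general
    (I : Ideal C^∞⟮𝓘(ℝ, E), E; 𝓘(ℝ, ℝ), ℝ⟯) (J : Ideal C^∞⟮I', M; 𝓘(ℝ, ℝ), ℝ⟯)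
    (hJ : IsNearPointDetermined ℝ (C^∞⟮I', M; 𝓘(ℝ, ℝ), ℝ⟯ ⧸ J))
    (φ : (C^∞⟮𝓘(ℝ, E), E; 𝓘(ℝ, ℝ), ℝ⟯ ⧸ I) →ₐ[ℝ] (C^∞⟮I', M; 𝓘(ℝ, ℝ), ℝ⟯ ⧸ J)) :
    ∃ ψ : C^∞⟮I', M; 𝓘(ℝ, E), E⟯,
      (∀ u ∈ I, u.comp ψ ∈ J) ∧
      ∀ u : C^∞⟮𝓘(ℝ, E), E; 𝓘(ℝ, ℝ), ℝ⟯,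
        φ (Ideal.Quotient.mk I u) = Ideal.Quotient.mk J (u.comp ψ) := by
  obtain ⟨ψ, hψ⟩ := exists_eq_mkₐ_comp_contMDiffPullback hJ (φ.comp (Ideal.Quotient.mkₐ ℝ I))
  have hφ (u : C^∞⟮𝓘(ℝ, E), E; 𝓘(ℝ, ℝ), ℝ⟯) :
      φ (Ideal.Quotient.mk I u) = Ideal.Quotient.mk J (u.comp ψ) := DFunLike.congr_fun hψ u
  refine ⟨ψ, fun u hu => ?_, hφ⟩
  rw [← Ideal.Quotient.eq_zero_iff_mem, ← hφ, Ideal.Quotient.eq_zero_iff_mem.2 hu, map_zero]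

end Lifting

/-- Let `I` be an ideal of `C^∞(ℝ^n, ℝ)` and `J` an ideal of `C^∞(ℝ^m, ℝ)`
such that the quotient `ℝ`-algebras `W₁ = C^∞(ℝ^n, ℝ)/I` and `W₂ = C^∞(ℝ^m, ℝ)/J` are
Weil algebras.  Then every `ℝ`-algebra homomorphism `φ : W₁ → W₂` is induced by
precomposition with some smooth map `ψ : ℝ^m → ℝ^n` which carries `I` into `J`:
`φ [u] = [u ∘ ψ]` for all `u`. -/
theorem weilAlgebraHom_exists_smooth_map
    {n m : ℕ}
    (I : Ideal C^∞⟮𝓘(ℝ, Fin n → ℝ), (Fin n → ℝ); 𝓘(ℝ, ℝ), ℝ⟯)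
    (J : Ideal C^∞⟮𝓘(ℝ, Fin m → ℝ), (Fin m → ℝ); 𝓘(ℝ, ℝ), ℝ⟯)
    (hI : IsWeilAlgebra (C^∞⟮𝓘(ℝ, Fin n → ℝ), (Fin n → ℝ); 𝓘(ℝ, ℝ), ℝ⟯ ⧸ I))
    (hJ : IsWeilAlgebra (C^∞⟮𝓘(ℝ, Fin m → ℝ), (Fin m → ℝ); 𝓘(ℝ, ℝ), ℝ⟯ ⧸ J))
    (φ : (C^∞⟮𝓘(ℝ, Fin n → ℝ), (Fin n → ℝ); 𝓘(ℝ, ℝ), ℝ⟯ ⧸ I) →ₐ[ℝ]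
         (C^∞⟮𝓘(ℝ, Fin m → ℝ), (Fin m → ℝ); 𝓘(ℝ, ℝ), ℝ⟯ ⧸ J)) :
    ∃ ψ : C^∞⟮𝓘(ℝ, Fin m → ℝ), (Fin m → ℝ); 𝓘(ℝ, Fin n → ℝ), (Fin n → ℝ)⟯,
      (∀ u ∈ I, u.comp ψ ∈ J) ∧
      ∀ u : C^∞⟮𝓘(ℝ, Fin n → ℝ), (Fin n → ℝ); 𝓘(ℝ, ℝ), ℝ⟯,
        φ (Ideal.Quotient.mk I u) = Ideal.Quotient.mk J (u.comp ψ) :=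
  weilAlgebraHom_exists_smooth_map_general I J hJ.isNearPointDetermined φ
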